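/- Let r,q ≥ 1 with rq > 1. Form the pointed connection digraph of σ_{rq}: its vertices are all labels L^j_k with L ∈ {A,B}, 0 ≤ j ≤ r, 0 ≤ k ≤ q, including the formal vertex ⋆ = A^0_0; edges between genuine labels are those of the connection digraph of σ_{rq} (transported via meander positions), and additionally there is an edge v → ⋆ from every genuine vertex v of Morse number 0. Then the involution R defined by R(A^j_k) = B^{r−j}_{q−k} and R(B^j_k) = A^{r−j}_{q−k} is an edge-reversing automorphism: for all vertices u,v, there is an edge u → v if and only if there is an edge R(v) → R(u). In particular, the pointed connection graph is time-reversible. -/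

import Mathlib

/-- Morse numbers `i_j` of a permutation `σ` of `{1,…,N}` (extended to `ℕ`),
via the recursion `i_1 = 0`,
`i_{j+1} = i_j + (-1)^(j+1) * sign (σ⁻¹(j+1) - σ⁻¹(j))`. -/
def morse (σ : Equiv.Perm ℕ) : ℕ → ℤ
  | 0 => 0
  | 1 => 0
  | (j+2) => morse σ (j+1) +
      (-1)^(j+2) * Int.sign ((σ.symm (j+2) : ℤ) - (σ.symm (j+1) : ℤ))

/-- Zero numbers `z_{j k}`, recursion in the first index `j`, second index `k` fixed:
`z_{1k} = 0`, `z_{kk} = i_k`, `z_{k+1,k} = min (i_k, i_{k+1})`, and otherwise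
`z_{j+1,k} = z_{jk} + ((-1)^(j+1)/2) * (sign (σ⁻¹(j+1) - σ⁻¹(k)) - sign (σ⁻¹(j) - σ⁻¹(k)))`. -/
def zrec (σ : Equiv.Perm ℕ) (k : ℕ) : ℕ → ℤ
  | 0 => 0
  | 1 => 0
  | (j+2) =>
      if j+2 = k then morse σ k
      else if j+1 = k then min (morse σ k) (morse σ (k+1))
      else zrec σ k (j+1) +
        ((-1)^(j+2) * (Int.sign ((σ.symm (j+2) : ℤ) - (σ.symm k : ℤ))
          - Int.sign ((σ.symm (j+1) : ℤ) - (σ.symm k : ℤ)))) / 2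

/-- The zero number `z_{m n}`. -/
def zfun (σ : Equiv.Perm ℕ) (m n : ℕ) : ℤ := zrec σ n m

/-- The connection digraph of a dissipative Morse permutation `σ` of `{1,…,N}`:
an edge `m ⤳ n` iff `i_m = i_n + 1` and no `w` strictly between `m` and `n`
blocks, i.e. satisfies `z_{mw} = z_{wn} = z_{mn}`. -/
def hasEdge (N : ℕ) (σ : Equiv.Perm ℕ) (m n : ℕ) : Prop :=
  1 ≤ m ∧ m ≤ N ∧ 1 ≤ n ∧ n ≤ N ∧
  morse σ m = morse σ n + 1 ∧
  ¬ ∃ w : ℕ, min m n < w ∧ w < max m n ∧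
      zfun σ m w = zfun σ w n ∧ zfun σ w n = zfun σ m n

/-- A dissipative permutation of `{1,…,N}`. -/
def Dissipative (N : ℕ) (σ : Equiv.Perm ℕ) : Prop :=
  Set.BijOn σ (Set.Icc 1 N) (Set.Icc 1 N) ∧ σ 1 = 1 ∧ σ N = N

/-- The Morse property: all Morse numbers are nonnegative. -/
def MorseProp (N : ℕ) (σ : Equiv.Perm ℕ) : Prop :=
  ∀ j, 1 ≤ j → j ≤ N → 0 ≤ morse σ j

/-- Morse counts `μ(i) = #{j ∈ {1,…,N} : i_j = i}`. -/
def morseCount (N : ℕ) (σ : Equiv.Perm ℕ) (i : ℤ) : ℕ :=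
  ((Finset.Icc 1 N).filter (fun j => morse σ j = i)).card

/-- The primitive 3-nose permutation `σ_{rq}` of `{1,…,N}`, `N = 2(r+1)(q+1)-1`,
characterized by its defining relations, extended to a permutation of `ℕ`
fixing everything outside `{1,…,N}`. -/
def SigmaRQ (r q : ℕ) (σ : Equiv.Perm ℕ) : Prop :=
  (∀ a, a ∉ Set.Icc 1 (2*(r+1)*(q+1) - 1) → σ a = a) ∧
  (∀ j k, j ≤ r → k ≤ q →
    σ (2*((q+1)*j+k)+1) = 2*(j+(r+1)*k)+1) ∧
  (∀ j k, j ≤ r → k ≤ q → ¬(j = 0 ∧ k = 0) →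
    σ (2*((q+1)*(r-j)+(q-k)+1)) = 2*(j+(r+1)*k))

/-- Tags `A`, `B` of equilibrium labels `A^j_k`, `B^j_k`. -/
inductive Tag | A | B
deriving DecidableEq

/-- The axis position (`h_1`-position) of the label `L^j_k` for parameters `(r,q)`. -/
def axisPos (r q : ℕ) : Tag → ℕ → ℕ → ℕ
  | Tag.A, j, k => if Odd j then (q+1)*(j-1)+k+1 else (q+1)*(2*r+1-j)+(q-k)+1
  | Tag.B, j, k => if Odd j then (q+1)*j+(q-k)+1 else (q+1)*(2*r-j)+k+1

/-- The meander position (`h_0`-position) of the label `L^j_k` for parameters `(r,q)`. -/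
def meanderPos (r q : ℕ) : Tag → ℕ → ℕ → ℕ
  | Tag.A, j, k => if Odd k then (r+1)*(2*q+1-k)+(2*r+1-j) else (r+1)*k+j
  | Tag.B, j, k => if Odd k then (r+1)*(2*q+1-k)+j else (r+1)*(k+1)+(r-j)

/-- The suspension `σ̃` of a dissipative permutation `σ` of `{1,…,N}`:
`σ̃(1) = 1`, `σ̃(N+2) = N+2`, and `σ̃(a+1) = N+2 - σ(a)` for `1 ≤ a ≤ N`. -/
def IsSuspension (N : ℕ) (σ σt : Equiv.Perm ℕ) : Prop :=
  σt 1 = 1 ∧ σt (N+2) = N+2 ∧ ∀ a, 1 ≤ a → a ≤ N → σt (a+1) = N+2 - σ a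

/-- The label `A^0_0` is the distinguished (formal) vertex `⋆`. -/
def IsStar (L : Tag) (j k : ℕ) : Prop := L = Tag.A ∧ j = 0 ∧ k = 0

/-- Tag swap `A ↔ B`, used by the reversor. -/
def tagSwap : Tag → Tag
  | Tag.A => Tag.B
  | Tag.B => Tag.A

/-- Edges of the pointed connection digraph of `σ_{rq}` on labels, including
the distinguished vertex `⋆ = A^0_0`: edges between genuine labels are those of
the connection digraph (via meander positions), plus an edge `v → ⋆` from every
genuine vertex `v` of Morse number `0`. -/
def PEdge (r q : ℕ) (σ : Equiv.Perm ℕ) (L : Tag) (j k : ℕ)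
    (L' : Tag) (j' k' : ℕ) : Prop :=
  (¬ IsStar L j k ∧ ¬ IsStar L' j' k' ∧
    hasEdge (2*(r+1)*(q+1)-1) σ
      (σ (axisPos r q L j k)) (σ (axisPos r q L' j' k'))) ∨
  (¬ IsStar L j k ∧ IsStar L' j' k' ∧ morse σ (σ (axisPos r q L j k)) = 0)


namespace ThreeNose

/-- Block index of the meander position. -/
def mb (q : ℕ) : Tag → ℕ → ℕ
  | Tag.A, k => if k % 2 = 1 then 2*q+2-k else k
  | Tag.B, k => if k % 2 = 1 then 2*q+1-k else k+1

/-- Offset in the block of the meander position. -/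
def mo (r : ℕ) : Tag → ℕ → ℕ → ℕ
  | Tag.A, j, k => if k % 2 = 1 then r-j else j
  | Tag.B, j, k => if k % 2 = 1 then j else r-j

/-- Block index of the axis position. -/
def ab (r : ℕ) : Tag → ℕ → ℕ
  | Tag.A, j => if j % 2 = 1 then j-1 else 2*r+1-j
  | Tag.B, j => if j % 2 = 1 then j else 2*r-j

/-- Offset in the block of the axis position. -/
def ao (q : ℕ) : Tag → ℕ → ℕ → ℕ
  | Tag.A, j, k => if j % 2 = 1 then k else q-k
  | Tag.B, j, k => if j % 2 = 1 then q-k else k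

/-- Closed form of the Morse number. -/
def mz : Tag → ℕ → ℕ → ℤ
  | Tag.A, j, k => (j:ℤ)+k-1
  | Tag.B, j, k => (j:ℤ)+k

/-- Parity marker of the meander position. -/
def par : Tag → ℕ → ℕ → ℕ
  | Tag.A, j, k => j+k
  | Tag.B, j, k => j+k+1

/-- Closed form of the zero numbers. -/
def Z : Tag → ℕ → ℕ → Tag → ℕ → ℕ → ℤ
  | Tag.A, j, k, Tag.A, a, b => min (min ((j:ℤ)+k-1) ((a:ℤ)+b-1)) (min ((j:ℤ)+b) ((a:ℤ)+k))
  | Tag.B, j, k, Tag.B, a, b => 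
      min (min ((j:ℤ)+k+1) ((a:ℤ)+b+1)) (min ((j:ℤ)+b) ((a:ℤ)+k))
  | Tag.B, j, k, Tag.A, a, b => min (j:ℤ) ((a:ℤ)-1) + min (k:ℤ) ((b:ℤ)-1) + 1
  | Tag.A, a, b, Tag.B, j, k => min (j:ℤ) ((a:ℤ)-1) + min (k:ℤ) ((b:ℤ)-1) + 1

/-- Closed form of the edge relation. -/
def ER : Tag → ℕ → ℕ → Tag → ℕ → ℕ → Prop
  | Tag.A, j, k, Tag.A, a, b => (j = a+1 ∧ k = b) ∨ (j = a ∧ k = b+1)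
  | Tag.B, j, k, Tag.B, a, b => (j = a+1 ∧ k = b) ∨ (j = a ∧ k = b+1)
  | Tag.B, j, k, Tag.A, a, b => j = a ∧ k = b
  | Tag.A, j, k, Tag.B, a, b => (j = a+2 ∧ k = b) ∨ (j = a ∧ k = b+2)

/-- Genuine labels. -/
def Gen (r q : ℕ) (L : Tag) (j k : ℕ) : Prop := j ≤ r ∧ k ≤ q ∧ (L = Tag.A → 1 ≤ j + k)

lemma mpos_eq (r q : ℕ) (L : Tag) (j k : ℕ) (hj : j ≤ r) (hk : k ≤ q) :
    meanderPos r q L j k = (r+1) * mb q L k + mo r L j k := by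
  rcases Nat.mod_two_eq_zero_or_one k with h | h <;> cases L <;>
    simp [meanderPos, mb, mo, Nat.odd_iff, h]
  rw [show 2*q+2-k = (2*q+1-k)+1 by omega, Nat.mul_succ]
  omega

lemma axis_eq (r q : ℕ) (L : Tag) (j k : ℕ) :
    axisPos r q L j k = (q+1) * ab r L j + ao q L j k + 1 := by
  rcases Nat.mod_two_eq_zero_or_one j with h | h <;> cases L <;>
    simp [axisPos, ab, ao, Nat.odd_iff, h]

lemma lex_lt (n b o b' o' : ℕ) (ho : o ≤ n) (ho' : o' ≤ n) :
    (n+1)*b+o < (n+1)*b'+o' ↔ b < b' ∨ (b = b' ∧ o < o') := by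
  rcases lt_trichotomy b b' with h | h | h
  · have : (n+1)*(b+1) ≤ (n+1)*b' := Nat.mul_le_mul_left _ h
    rw [Nat.mul_succ] at this
    omega
  · subst h; omega
  · have : (n+1)*(b'+1) ≤ (n+1)*b := Nat.mul_le_mul_left _ h
    rw [Nat.mul_succ] at this
    omega

lemma mo_le (r : ℕ) (L : Tag) (j k : ℕ) (hj : j ≤ r) : mo r L j k ≤ r := by
  cases L <;> simp only [mo] <;> split_ifs <;> omega

lemma ao_le (q : ℕ) (L : Tag) (j k : ℕ) (hk : k ≤ q) : ao q L j k ≤ q := by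
  cases L <;> simp only [ao] <;> split_ifs <;> omega

/-- Lexicographic meander order. -/
def mlt (r q : ℕ) (L : Tag) (j k : ℕ) (M : Tag) (a b : ℕ) : Prop :=
  mb q L k < mb q M b ∨ (mb q L k = mb q M b ∧ mo r L j k < mo r M a b)

/-- Lexicographic axis order. -/
def alt (r q : ℕ) (L : Tag) (j k : ℕ) (M : Tag) (a b : ℕ) : Prop :=
  ab r L j < ab r M a ∨ (ab r L j = ab r M a ∧ ao q L j k < ao q M a b)

lemma mpos_lt (r q : ℕ) (L : Tag) (j k : ℕ) (M : Tag) (a b : ℕ)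
    (hj : j ≤ r) (hk : k ≤ q) (ha : a ≤ r) (hb : b ≤ q) :
    meanderPos r q L j k < meanderPos r q M a b ↔ mlt r q L j k M a b := by
  rw [mpos_eq _ _ _ _ _ hj hk, mpos_eq _ _ _ _ _ ha hb,
    lex_lt _ _ _ _ _ (mo_le _ _ _ _ hj) (mo_le _ _ _ _ ha)]
  rfl

lemma axis_lt (r q : ℕ) (L : Tag) (j k : ℕ) (M : Tag) (a b : ℕ)
    (hk : k ≤ q) (hb : b ≤ q) :
    axisPos r q L j k < axisPos r q M a b ↔ alt r q L j k M a b := by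
  rw [axis_eq, axis_eq, Nat.add_lt_add_iff_right,
    lex_lt _ _ _ _ _ (ao_le _ _ _ _ hk) (ao_le _ _ _ _ hb)]
  rfl

lemma mpos_inj (r q : ℕ) (L : Tag) (j k : ℕ) (M : Tag) (a b : ℕ)
    (hj : j ≤ r) (hk : k ≤ q) (ha : a ≤ r) (hb : b ≤ q)
    (h : meanderPos r q L j k = meanderPos r q M a b) : L = M ∧ j = a ∧ k = b := by
  have h1 := (mpos_lt r q L j k M a b hj hk ha hb).not.1 (by omega)
  have h2 := (mpos_lt r q M a b L j k ha hb hj hk).not.1 (by omega)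
  unfold mlt at h1 h2
  cases L <;> cases M <;> simp only [mb, mo] at h1 h2 <;> split_ifs at h1 h2 <;>
    simp only [true_and, reduceCtorEq, false_and] <;> omega

lemma mpos_surj (r q m : ℕ) (h1 : 1 ≤ m) (h2 : m ≤ 2*(r+1)*(q+1)-1) :
    ∃ L j k, Gen r q L j k ∧ meanderPos r q L j k = m := by
  obtain ⟨b, o, ho, rfl⟩ : ∃ b o, o ≤ r ∧ m = (r+1)*b+o :=
    ⟨m / (r+1), m % (r+1), Nat.lt_succ_iff.1 (Nat.mod_lt _ (by omega)), (Nat.div_add_mod _ _).symm⟩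
  have hb : b < 2*(q+1) := by
    by_contra hb
    have : (r+1)*(2*(q+1)) ≤ (r+1)*b := Nat.mul_le_mul_left _ (by omega)
    have e : (r+1)*(2*(q+1)) = 2*(r+1)*(q+1) := by ring
    rw [e] at this
    have : 1 ≤ 2*(r+1)*(q+1) := Nat.succ_le_of_lt (by positivity)
    omega
  have key : ∃ L j k, j ≤ r ∧ k ≤ q ∧ mb q L k = b ∧ mo r L j k = o := by
    rcases Nat.mod_two_eq_zero_or_one b with e | e
    · by_cases hq : b ≤ q
      · exact ⟨Tag.A, o, b, ho, hq, by simp [mb, e], by simp [mo, e]⟩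
      · have : (2*q+1-b) % 2 = 1 := by omega
        exact ⟨Tag.B, o, 2*q+1-b, ho, by omega, by simp only [mb, this, if_true]; omega, by simp [mo, this]⟩
    · by_cases hq : b ≤ q+1
      · have : (b-1) % 2 = 0 := by omega
        exact ⟨Tag.B, r-o, b-1, by omega, by omega, by simp [mb, this]; omega, by simp [mo, this]; omega⟩
      · have : (2*q+2-b) % 2 = 1 := by omega
        exact ⟨Tag.A, r-o, 2*q+2-b, by omega, by omega, by simp only [mb, this, if_true]; omega,
          by simp only [mo, this, if_true]; omega⟩
  obtain ⟨L, j, k, hj, hk, e1, e2⟩ := key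
  refine ⟨L, j, k, ⟨hj, hk, ?_⟩, by rw [mpos_eq _ _ _ _ _ hj hk, e1, e2]⟩
  rintro rfl
  by_contra hc
  obtain ⟨rfl, rfl⟩ : j = 0 ∧ k = 0 := by omega
  simp [mb, mo] at e1 e2
  subst e1 e2
  simp at h1

lemma mpos_range (r q : ℕ) (L : Tag) (j k : ℕ) (h : Gen r q L j k) :
    1 ≤ meanderPos r q L j k ∧ meanderPos r q L j k ≤ 2*(r+1)*(q+1)-1 := by
  obtain ⟨hj, hk, hs⟩ := h
  have e : 2*(r+1)*(q+1) = (r+1)*(2*q+1)+(r+1) := by ring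
  constructor
  · by_contra hc
    have h0 : meanderPos r q L j k = meanderPos r q Tag.A 0 0 := by
      rw [show meanderPos r q Tag.A 0 0 = 0 by simp [meanderPos]]; omega
    obtain ⟨rfl, rfl, rfl⟩ := mpos_inj r q L j k Tag.A 0 0 hj hk (by omega) (by omega) h0
    simp at hs
  · have hb : mb q L k ≤ 2*q+1 := by cases L <;> simp only [mb] <;> split_ifs <;> omega
    have ho := mo_le r L j k hj
    have := Nat.mul_le_mul_left (r+1) hb
    rw [mpos_eq _ _ _ _ _ hj hk, e]
    omega

lemma mpos_parity (r q : ℕ) (L : Tag) (j k : ℕ) (hj : j ≤ r) (hk : k ≤ q) :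
    meanderPos r q L j k % 2 = par L j k % 2 := by
  rcases Nat.mod_two_eq_zero_or_one k with h | h
  · obtain ⟨c, rfl⟩ : ∃ c, k = 2*c := ⟨k/2, by omega⟩
    cases L
    · simp only [meanderPos, par, Nat.odd_iff, h, zero_ne_one, if_false]
      rw [show (r+1)*(2*c) = 2*((r+1)*c) by ring]; omega
    · simp only [meanderPos, par, Nat.odd_iff, h, zero_ne_one, if_false]
      rw [show (r+1)*(2*c+1) = 2*((r+1)*c) + r+1 by ring]; omega
  · obtain ⟨c, hc⟩ : ∃ c, 2*q+1-k = 2*c := ⟨(2*q+1-k)/2, by omega⟩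
    cases L
    · simp only [meanderPos, par, Nat.odd_iff, h, if_true, hc]
      rw [show (r+1)*(2*c) = 2*((r+1)*c) by ring]; omega
    · simp only [meanderPos, par, Nat.odd_iff, h, if_true, hc]
      rw [show (r+1)*(2*c) = 2*((r+1)*c) by ring]; omega

lemma sigma_axis (r q : ℕ) (σ : Equiv.Perm ℕ) (hσ : SigmaRQ r q σ) (L : Tag) (j k : ℕ)
    (h : Gen r q L j k) : σ (axisPos r q L j k) = meanderPos r q L j k := by
  obtain ⟨-, ho, he⟩ := hσ
  obtain ⟨hj, hk, hs⟩ := h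
  obtain ⟨r', rfl⟩ := Nat.exists_eq_add_of_le hj
  obtain ⟨q', rfl⟩ := Nat.exists_eq_add_of_le hk
  have ea := axis_eq (j+r') (k+q') L j k
  have em := mpos_eq (j+r') (k+q') L j k hj hk
  have odd : ∀ J K B O B' O', J ≤ j + r' → K ≤ k + q' → ab (j+r') L j = B → ao (k+q') L j k = O →
      mb (k+q') L k = B' → mo (j+r') L j k = O' →
      (k+q'+1)*B+O = 2*((k+q'+1)*J+K) → (j+r'+1)*B'+O' = 2*(J+(j+r'+1)*K)+1 →
      σ (axisPos (j+r') (k+q') L j k) = meanderPos (j+r') (k+q') L j k := by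
    intro J K B O B' O' hJ hK h1 h2 h3 h4 h5 h6
    rw [ea, em, h1, h2, h3, h4, h5, h6, ho J K hJ hK]
  have even : ∀ J K J' K' B O B' O', J + J' = j + r' → K + K' = k + q' →
      ab (j+r') L j = B → ao (k+q') L j k = O →
      mb (k+q') L k = B' → mo (j+r') L j k = O' → 1 ≤ J + K →
      (k+q'+1)*B+O+1 = 2*((k+q'+1)*J'+K'+1) → (j+r'+1)*B'+O' = 2*(J+(j+r'+1)*K) →
      σ (axisPos (j+r') (k+q') L j k) = meanderPos (j+r') (k+q') L j k := by
    intro J K J' K' B O B' O' hJ hK h1 h2 h3 h4 h0 h5 h6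
    have e1 : J' = j + r' - J := by omega
    have e2 : K' = k + q' - K := by omega
    rw [ea, em, h1, h2, h3, h4, h5, h6, e1, e2, he J K (by omega) (by omega) (by omega)]
  clear ea em ho he
  have aux : ∀ x, ¬ (2*x % 2 = 1) := by omega
  have aux' : ∀ x, (2*x+1) % 2 = 1 := by omega
  obtain ⟨x, hx | hx⟩ : ∃ x, j = 2*x ∨ j = 2*x+1 := ⟨j/2, by omega⟩ <;>
  obtain ⟨y, hy | hy⟩ : ∃ y, k = 2*y ∨ k = 2*y+1 := ⟨k/2, by omega⟩ <;>
  subst hx hy <;> cases L <;> simp only [ab, ao, mb, mo, aux, aux', if_true, if_false] at odd even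
  -- j even, k even
  · exact even x y (x+r') (y+q') (2*x+2*r'+1) q' (2*y) (2*x) (by omega) (by omega) (by omega)
      (by omega) (by omega) (by omega) (by have := hs rfl; omega) (by ring) (by ring)
  · exact odd (x+r') y (2*x+2*r') (2*y) (2*y+1) r' (by omega) (by omega) (by omega)
      (by omega) (by omega) (by omega) (by ring) (by ring)
  -- j even, k odd
  · exact odd (x+r') (y+1+q') (2*x+2*r'+1) q' (2*y+1+2*q'+2) r' (by omega) (by omega) (by omega)
      (by omega) (by omega) (by omega) (by ring) (by ring)
  · exact even x (y+1+q') (x+r') y (2*x+2*r') (2*y+1) (2*y+1+2*q'+1) (2*x) (by omega) (by omega)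
      (by omega) (by omega) (by omega) (by omega) (by omega) (by ring) (by ring)
  -- j odd, k even
  · exact odd x y (2*x) (2*y) (2*y) (2*x+1) (by omega) (by omega) (by omega)
      (by omega) (by omega) (by omega) (by ring) (by ring)
  · exact even (x+1+r') y x (y+q') (2*x+1) q' (2*y+1) r' (by omega) (by omega)
      (by omega) (by omega) (by omega) (by omega) (by omega) (by ring) (by ring)
  -- j odd, k odd
  · exact even (x+1+r') (y+1+q') x y (2*x) (2*y+1) (2*y+1+2*q'+2) r' (by omega) (by omega)
      (by omega) (by omega) (by omega) (by omega) (by omega) (by ring) (by ring)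
  · exact odd x (y+1+q') (2*x+1) q' (2*y+1+2*q'+1) (2*x+1) (by omega) (by omega)
      (by omega) (by omega) (by omega) (by omega) (by ring) (by ring)

/-- Successor relation along the meander. -/
inductive Step (r q : ℕ) : Tag → ℕ → ℕ → Tag → ℕ → ℕ → Prop
  | s1 (j k : ℕ) : j + 1 ≤ r → k ≤ q → k % 2 = 0 → Step r q Tag.A j k Tag.A (j+1) k
  | s2 (k : ℕ) : k ≤ q → k % 2 = 0 → Step r q Tag.A r k Tag.B r k
  | s3 (j k : ℕ) : j + 1 ≤ r → k ≤ q → k % 2 = 0 → Step r q Tag.B (j+1) k Tag.B j k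
  | s4 (k : ℕ) : k + 2 ≤ q → k % 2 = 0 → Step r q Tag.B 0 k Tag.A 0 (k+2)
  | s5 (k : ℕ) : k = q → k % 2 = 0 → 1 ≤ k → Step r q Tag.B 0 k Tag.B 0 (k-1)
  | s5' (k : ℕ) : k + 1 = q → k % 2 = 0 → Step r q Tag.B 0 k Tag.B 0 (k+1)
  | s6 (j k : ℕ) : j + 1 ≤ r → k ≤ q → k % 2 = 1 → Step r q Tag.B j k Tag.B (j+1) k
  | s7 (k : ℕ) : k ≤ q → k % 2 = 1 → Step r q Tag.B r k Tag.A r k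
  | s8 (j k : ℕ) : j + 1 ≤ r → k ≤ q → k % 2 = 1 → Step r q Tag.A (j+1) k Tag.A j k
  | s9 (k : ℕ) : k + 2 ≤ q → k % 2 = 1 → Step r q Tag.A 0 (k+2) Tag.B 0 k

lemma exists_pred (r q : ℕ) (hq : 1 ≤ q) (L : Tag) (j k : ℕ) (h : Gen r q L j k) :
    ∃ L' j' k', j' ≤ r ∧ k' ≤ q ∧ Step r q L' j' k' L j k := by
  obtain ⟨hj, hk, hs⟩ := h
  rcases Nat.mod_two_eq_zero_or_one k with pk | pk
  · cases L
    · rcases j with _ | j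
      · have := hs rfl
        obtain ⟨k, rfl⟩ : ∃ k', k = k' + 2 := ⟨k-2, by omega⟩
        exact ⟨_, _, _, by omega, by omega, Step.s4 k hk (by omega)⟩
      · exact ⟨_, _, _, by omega, by omega, Step.s1 j k hj hk pk⟩
    · rcases hj.eq_or_lt with rfl | hj
      · exact ⟨_, _, _, by omega, by omega, Step.s2 k hk pk⟩
      · exact ⟨_, _, _, by omega, by omega, Step.s3 j k hj hk pk⟩
  · cases L
    · rcases hj.eq_or_lt with rfl | hj
      · exact ⟨_, _, _, by omega, by omega, Step.s7 k hk pk⟩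
      · exact ⟨_, _, _, by omega, by omega, Step.s8 j k hj hk pk⟩
    · rcases j with _ | j
      · by_cases h2 : k + 2 ≤ q
        · exact ⟨_, _, _, by omega, by omega, Step.s9 k h2 pk⟩
        · by_cases h1 : k + 1 = q
          · exact ⟨_, _, _, by omega, by omega, Step.s5 (k+1) h1 (by omega) (by omega)⟩
          · obtain ⟨k, rfl⟩ : ∃ k', k = k' + 1 := ⟨k-1, by omega⟩
            exact ⟨_, _, _, by omega, by omega, Step.s5' k (by omega) (by omega)⟩
      · exact ⟨_, _, _, by omega, by omega, Step.s6 j k hj hk pk⟩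

lemma step_pos (r q : ℕ) (L : Tag) (j k : ℕ) (L' : Tag) (j' k' : ℕ)
    (hj : j ≤ r) (hk : k ≤ q) (hj' : j' ≤ r) (hk' : k' ≤ q)
    (h : Step r q L j k L' j' k') : meanderPos r q L' j' k' = meanderPos r q L j k + 1 := by
  rw [mpos_eq _ _ _ _ _ hj hk, mpos_eq _ _ _ _ _ hj' hk']
  have key : (mb q L k = mb q L' k' ∧ mo r L j k + 1 = mo r L' j' k') ∨
      (mb q L k + 1 = mb q L' k' ∧ mo r L j k = r ∧ mo r L' j' k' = 0) := by
    cases h <;> simp only [mb, mo, true_and] <;> split_ifs <;> omega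
  rcases key with ⟨h1, h2⟩ | ⟨h1, h2, h3⟩
  · rw [h1, ← h2]; omega
  · rw [← h1, h2, h3, Nat.mul_succ]; omega

lemma step_morse (r q : ℕ) (L : Tag) (j k : ℕ) (L' : Tag) (j' k' : ℕ)
    (h : Step r q L j k L' j' k') :
    (alt r q L j k L' j' k' ∧ mz L' j' k' = mz L j k + (if par L' j' k' % 2 = 0 then 1 else -1)) ∨
    (alt r q L' j' k' L j k ∧ mz L' j' k' = mz L j k - (if par L' j' k' % 2 = 0 then 1 else -1)) := by
  unfold alt
  rcases Nat.mod_two_eq_zero_or_one j with pj | pj <;>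
  rcases Nat.mod_two_eq_zero_or_one j' with pj' | pj' <;>
  rcases Nat.mod_two_eq_zero_or_one (par L' j' k') with pp | pp <;>
  cases L <;> cases L' <;>
  simp only [ab, ao, pj, pj', pp, zero_ne_one, one_ne_zero, if_true, if_false] <;>
  simp only [par] at pp <;> simp only [mz] <;>
  cases h <;> omega

lemma step_self (r q : ℕ) (L : Tag) (j k : ℕ) (L' : Tag) (j' k' : ℕ) (hg : Gen r q L j k)
    (h : Step r q L j k L' j' k') :
    Z L' j' k' L j k = min (mz L j k) (mz L' j' k') := by
  obtain ⟨-, -, hs⟩ := hg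
  cases h <;> simp only [Z, mz] <;> simp at hs <;> omega

lemma Z_self (L : Tag) (j k : ℕ) : Z L j k L j k = mz L j k := by
  cases L <;> simp only [Z, mz] <;> omega

lemma Z_start (M : Tag) (a b : ℕ) (h : M = Tag.A → 1 ≤ a + b) : Z Tag.A 1 0 M a b = 0 := by
  cases M <;> simp only [Z] <;> simp at h <;> omega

/-- Local increment of the zero number. -/
def StepOK (r q : ℕ) (L : Tag) (j k : ℕ) (L' : Tag) (j' k' : ℕ) (M : Tag) (a b : ℕ) : Prop :=
  (alt r q L j k M a b → alt r q M a b L' j' k' →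
    Z L' j' k' M a b = Z L j k M a b + (if par L' j' k' % 2 = 0 then 1 else -1)) ∧
  (alt r q L' j' k' M a b → alt r q M a b L j k →
    Z L' j' k' M a b = Z L j k M a b - (if par L' j' k' % 2 = 0 then 1 else -1)) ∧
  (alt r q L j k M a b → alt r q L' j' k' M a b → Z L' j' k' M a b = Z L j k M a b) ∧
  (alt r q M a b L j k → alt r q M a b L' j' k' → Z L' j' k' M a b = Z L j k M a b)

/-- Piecewise description of the closed form `Z`. -/
def ZS : Tag → ℕ → ℕ → Tag → ℕ → ℕ → ℤ → Prop
  | Tag.A, j, k, Tag.A, a, b, z =>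
    (k < b → j ≤ a → z = j+k-1) ∧ (k < b → a < j → z = a+k) ∧
    (k = b → j ≤ a → z = j+k-1) ∧ (k = b → a ≤ j → z = a+k-1) ∧
    (b < k → j < a → z = j+b) ∧ (b < k → a ≤ j → z = a+b-1)
  | Tag.B, j, k, Tag.B, a, b, z =>
    (k < b → j < a → z = j+k+1) ∧ (k < b → a ≤ j → z = a+k) ∧
    (k = b → j ≤ a → z = j+k) ∧ (k = b → a ≤ j → z = a+k) ∧
    (b < k → j ≤ a → z = j+b) ∧ (b < k → a < j → z = a+b+1)
  | Tag.B, j, k, Tag.A, a, b, z =>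
    (k < b → j < a → z = j+k+1) ∧ (k < b → a ≤ j → z = a+k) ∧
    (b ≤ k → j < a → z = j+b) ∧ (b ≤ k → a ≤ j → z = a+b-1)
  | Tag.A, a, b, Tag.B, j, k, z =>
    (k < b → j < a → z = j+k+1) ∧ (k < b → a ≤ j → z = a+k) ∧
    (b ≤ k → j < a → z = j+b) ∧ (b ≤ k → a ≤ j → z = a+b-1)

lemma Z_spec (L : Tag) (j k : ℕ) (M : Tag) (a b : ℕ) : ZS L j k M a b (Z L j k M a b) := by
  cases L <;> cases M <;> simp only [Z, ZS] <;> omega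

lemma step_ok (r q : ℕ) (L : Tag) (j k : ℕ) (L' : Tag) (j' k' : ℕ) (M : Tag) (a b : ℕ)
    (hg : Gen r q L j k) (hM : Gen r q M a b)
    (h : Step r q L j k L' j' k') : StepOK r q L j k L' j' k' M a b := by
  obtain ⟨hj, hk, hs⟩ := hg
  obtain ⟨ha, hb, hM⟩ := hM
  unfold StepOK alt
  have f1 := Z_spec L j k M a b
  have f2 := Z_spec L' j' k' M a b
  generalize Z L j k M a b = z1 at *
  generalize Z L' j' k' M a b = z2 at *
  cases h <;> cases M <;> simp only [ab, ao, par, ZS] at * <;> grind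

set_option maxHeartbeats 4000000 in
lemma no_block (r q : ℕ) (L : Tag) (j k : ℕ) (L' : Tag) (j' k' : ℕ) (M : Tag) (a b : ℕ)
    (hL : Gen r q L j k) (hL' : Gen r q L' j' k') (hM : Gen r q M a b)
    (he : ER L j k L' j' k')
    (h : (mlt r q L j k M a b ∧ mlt r q M a b L' j' k') ∨
      (mlt r q L' j' k' M a b ∧ mlt r q M a b L j k))
    (h1 : Z L j k M a b = Z M a b L' j' k') (h2 : Z M a b L' j' k' = Z L j k L' j' k') : False := by
  obtain ⟨hj, hk, hs⟩ := hL
  obtain ⟨hj', hk', hs'⟩ := hL'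
  obtain ⟨ha, hb, hM⟩ := hM
  have f1 := Z_spec L j k M a b
  have f2 := Z_spec M a b L' j' k'
  have f3 := Z_spec L j k L' j' k'
  rw [h1, h2] at f1
  rw [h2] at f2
  generalize Z L j k L' j' k' = z at *
  clear h1 h2
  unfold mlt at h
  have he' : (L = Tag.B ∧ L' = Tag.A ∧ j = j' ∧ k = k') ∨ (L = L' ∧ j = j'+1 ∧ k = k') ∨
      (L = L' ∧ j = j' ∧ k = k'+1) ∨ (L = Tag.A ∧ L' = Tag.B ∧ j = j'+2 ∧ k = k') ∨
      (L = Tag.A ∧ L' = Tag.B ∧ j = j' ∧ k = k'+2) := by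
    cases L <;> cases L' <;> simp only [ER, reduceCtorEq, true_and, false_and] at he ⊢ <;> tauto
  clear he
  rcases he' with ⟨rfl, rfl, rfl, rfl⟩ | ⟨rfl, rfl, rfl⟩ | ⟨rfl, rfl, rfl⟩ |
    ⟨rfl, rfl, rfl, rfl⟩ | ⟨rfl, rfl, rfl, rfl⟩ <;>
  (try cases L) <;> cases M <;> simp only [mb, mo, ZS] at * <;>
    rcases h with h | h <;> grind (splits := 30)

lemma ex_block (r q : ℕ) (L : Tag) (j k : ℕ) (L' : Tag) (j' k' : ℕ)
    (hL : Gen r q L j k) (hL' : Gen r q L' j' k')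
    (hm : mz L j k = mz L' j' k' + 1)
    (he : ¬ ER L j k L' j' k') : ∃ M a b, Gen r q M a b ∧
    ((mlt r q L j k M a b ∧ mlt r q M a b L' j' k') ∨
      (mlt r q L' j' k' M a b ∧ mlt r q M a b L j k)) ∧
    Z L j k M a b = Z M a b L' j' k' ∧ Z M a b L' j' k' = Z L j k L' j' k' := by
  obtain ⟨hj, hk, hs⟩ := hL
  obtain ⟨hj', hk', hs'⟩ := hL'
  have key : ∀ a b, a ≤ r → b ≤ q → ((j' < j ∧ k' < k ∧ a = j ∧ b = k) ∨
      (j < j' ∧ k' < k ∧ a = j ∧ b = k') ∨ (j' < j ∧ k < k' ∧ a = j' ∧ b = k)) → 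
      (((mlt r q L j k Tag.B a b ∧ mlt r q Tag.B a b L' j' k') ∨
      (mlt r q L' j' k' Tag.B a b ∧ mlt r q Tag.B a b L j k)) ∧
      Z L j k Tag.B a b = Z Tag.B a b L' j' k' ∧ Z Tag.B a b L' j' k' = Z L j k L' j' k') := by
    intro a b ha hb h
    have f1 := Z_spec L j k Tag.B a b
    have f2 := Z_spec Tag.B a b L' j' k'
    have f3 := Z_spec L j k L' j' k'
    generalize Z L j k L' j' k' = z at *
    generalize Z L j k Tag.B a b = z1 at *
    generalize Z Tag.B a b L' j' k' = z2 at *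
    unfold mlt
    rcases h with ⟨h1, h2, rfl, rfl⟩ | ⟨h1, h2, rfl, rfl⟩ | ⟨h1, h2, rfl, rfl⟩ <;>
    cases L <;> cases L' <;> simp only [mb, mo, mz, ER, ZS] at * <;> refine ⟨?_, ?_, ?_⟩ <;> grind
  have hB : ∀ a b, a ≤ r → b ≤ q → Gen r q Tag.B a b := fun a b h h' => ⟨h, h', by simp⟩
  have cs : (j' < j ∧ k' < k) ∨ (j < j' ∧ k' < k) ∨ (j' < j ∧ k < k') := by
    cases L <;> cases L' <;> simp only [mz, ER] at * <;> omega
  rcases cs with h | h | h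
  · exact ⟨Tag.B, j, k, hB _ _ hj hk, key _ _ hj hk (by omega)⟩
  · exact ⟨Tag.B, j, k', hB _ _ hj hk', key _ _ hj hk' (by omega)⟩
  · exact ⟨Tag.B, j', k, hB _ _ hj' hk, key _ _ hj' hk (by omega)⟩

lemma sign_par (m : ℕ) (x y : ℕ) (p : ℕ) (hp : m % 2 = p % 2) (h : x < y) :
    (-1 : ℤ)^m * Int.sign ((y:ℤ) - x) = (if p % 2 = 0 then 1 else -1) ∧
    (-1 : ℤ)^m * Int.sign ((x:ℤ) - y) = - (if p % 2 = 0 then 1 else -1) := by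
  have e1 : Int.sign ((y:ℤ) - x) = 1 := Int.sign_eq_one_of_pos (by omega)
  have e2 : Int.sign ((x:ℤ) - y) = -1 := Int.sign_eq_neg_one_of_neg (by omega)
  rw [e1, e2]
  rcases Nat.mod_two_eq_zero_or_one p with h | h
  · rw [Even.neg_one_pow (Nat.even_iff.2 (by omega)), h]; simp
  · rw [Odd.neg_one_pow (Nat.odd_iff.2 (by omega)), h]; simp

lemma symm_pos (r q : ℕ) (σ : Equiv.Perm ℕ) (hσ : SigmaRQ r q σ) (L : Tag) (j k : ℕ)
    (h : Gen r q L j k) : σ.symm (meanderPos r q L j k) = axisPos r q L j k := by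
  rw [← sigma_axis r q σ hσ L j k h, Equiv.symm_apply_apply]

lemma pos_one (r q : ℕ) (hr : 1 ≤ r) (L : Tag) (j k : ℕ) (h : Gen r q L j k)
    (h1 : meanderPos r q L j k = 1) : L = Tag.A ∧ j = 1 ∧ k = 0 :=
  mpos_inj r q L j k Tag.A 1 0 h.1 h.2.1 hr (by omega) (by rw [h1]; simp [meanderPos])

lemma pred_gen (r q : ℕ) (hq : 1 ≤ q) (m : ℕ) (L : Tag) (j k : ℕ) (h : Gen r q L j k)
    (hm : meanderPos r q L j k = m+2) :
    ∃ L' j' k', Gen r q L' j' k' ∧ Step r q L' j' k' L j k ∧ meanderPos r q L' j' k' = m+1 := by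
  obtain ⟨L', j', k', hj, hk, hs⟩ := exists_pred r q hq L j k h
  have := step_pos _ _ _ _ _ _ _ _ hj hk h.1 h.2.1 hs
  refine ⟨L', j', k', ⟨hj, hk, ?_⟩, hs, by omega⟩
  rintro rfl
  by_contra hc
  obtain ⟨rfl, rfl⟩ : j' = 0 ∧ k' = 0 := by omega
  rw [show meanderPos r q Tag.A 0 0 = 0 by simp [meanderPos]] at this
  omega

lemma morse_eq (r q : ℕ) (hr : 1 ≤ r) (hq : 1 ≤ q) (σ : Equiv.Perm ℕ) (hσ : SigmaRQ r q σ)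
    (m : ℕ) : ∀ (L : Tag) (j k : ℕ), Gen r q L j k → meanderPos r q L j k = m + 1 →
      morse σ (m+1) = mz L j k := by
  induction m with
  | zero =>
    intro L j k h hm
    obtain ⟨rfl, rfl, rfl⟩ := pos_one r q hr L j k h hm
    simp [morse, mz]
  | succ m ih =>
    intro L j k h hm
    obtain ⟨L', j', k', h', hs, hm'⟩ := pred_gen r q hq m L j k h hm
    have hp := mpos_parity r q L j k h.1 h.2.1
    rw [morse, ih L' j' k' h' hm']
    have e1 := symm_pos r q σ hσ L j k h
    have e2 := symm_pos r q σ hσ L' j' k' h'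
    rw [hm] at e1 hp
    rw [hm'] at e2
    rw [show m + 1 + 1 = m + 2 from rfl] at e1 hp
    rw [e1, e2]
    rcases step_morse r q L' j' k' L j k hs with ⟨ha, he⟩ | ⟨ha, he⟩
    · rw [← axis_lt _ _ _ _ _ _ _ _ h'.2.1 h.2.1] at ha
      rw [(sign_par (m+2) _ _ _ hp ha).1, he.symm]
    · rw [← axis_lt _ _ _ _ _ _ _ _ h.2.1 h'.2.1] at ha
      rw [(sign_par (m+2) _ _ _ hp ha).2, ← sub_eq_add_neg, he.symm]

lemma morse_eq' (r q : ℕ) (hr : 1 ≤ r) (hq : 1 ≤ q) (σ : Equiv.Perm ℕ) (hσ : SigmaRQ r q σ)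
    (L : Tag) (j k : ℕ) (h : Gen r q L j k) :
    morse σ (meanderPos r q L j k) = mz L j k := by
  obtain ⟨m, hm⟩ : ∃ m, meanderPos r q L j k = m + 1 :=
    ⟨meanderPos r q L j k - 1, by have := (mpos_range r q L j k h).1; omega⟩
  rw [hm]; exact morse_eq r q hr hq σ hσ m L j k h hm

lemma half_diff (m x x' y p : ℕ) (hp : m % 2 = p % 2) (hx : x ≠ y) (hx' : x' ≠ y) (z z' : ℤ)
    (h1 : x < y → y < x' → z' = z + (if p % 2 = 0 then 1 else -1))
    (h2 : x' < y → y < x → z' = z - (if p % 2 = 0 then 1 else -1))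
    (h3 : x < y → x' < y → z' = z) (h4 : y < x → y < x' → z' = z) :
    z + ((-1)^m * (Int.sign ((x':ℤ) - y) - Int.sign ((x:ℤ) - y))) / 2 = z' := by
  rw [mul_sub]
  rcases lt_or_gt_of_ne hx with a | a <;> rcases lt_or_gt_of_ne hx' with b | b
  · rw [h3 a b, (sign_par m _ _ p hp a).2, (sign_par m _ _ p hp b).2]; simp
  · rw [h1 a b, (sign_par m _ _ p hp a).2, (sign_par m _ _ p hp b).1]; split_ifs <;> simp
  · rw [h2 b a, (sign_par m _ _ p hp a).1, (sign_par m _ _ p hp b).2]; split_ifs <;> simp <;> omega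
  · rw [h4 a b, (sign_par m _ _ p hp a).1, (sign_par m _ _ p hp b).1]; simp

lemma zrec_eq (r q : ℕ) (hr : 1 ≤ r) (hq : 1 ≤ q) (σ : Equiv.Perm ℕ) (hσ : SigmaRQ r q σ)
    (M : Tag) (a b : ℕ) (hM : Gen r q M a b)
    (m : ℕ) : ∀ (L : Tag) (j k : ℕ), Gen r q L j k → meanderPos r q L j k = m + 1 →
      zrec σ (meanderPos r q M a b) (m+1) = Z L j k M a b := by
  induction m with
  | zero =>
    intro L j k h hm
    obtain ⟨rfl, rfl, rfl⟩ := pos_one r q hr L j k h hm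
    rw [Z_start M a b hM.2.2, zero_add, zrec]
  | succ m ih =>
    intro L j k h hm
    obtain ⟨L', j', k', h', hs, hm'⟩ := pred_gen r q hq m L j k h hm
    have hp := mpos_parity r q L j k h.1 h.2.1
    rw [zrec, ih L' j' k' h' hm']
    have e1 := symm_pos r q σ hσ L j k h
    have e2 := symm_pos r q σ hσ L' j' k' h'
    rw [hm] at e1 hp
    rw [hm'] at e2
    rw [show m + 1 + 1 = m + 2 from rfl] at e1 hp
    rw [e1, e2, symm_pos r q σ hσ M a b hM]
    split_ifs with c1 c2
    · obtain ⟨rfl, rfl, rfl⟩ := mpos_inj r q L j k M a b h.1 h.2.1 hM.1 hM.2.1 (by omega)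
      rw [morse_eq' r q hr hq σ hσ _ _ _ h, Z_self]
    · obtain ⟨rfl, rfl, rfl⟩ := mpos_inj r q L' j' k' M a b h'.1 h'.2.1 hM.1 hM.2.1 (by omega)
      rw [morse_eq' r q hr hq σ hσ _ _ _ h', hm', ← show meanderPos r q L j k = m + 1 + 1 from hm,
        morse_eq' r q hr hq σ hσ _ _ _ h, step_self r q _ _ _ _ _ _ h' hs]
    · have ok := step_ok r q L' j' k' L j k M a b h' hM hs
      unfold StepOK at ok
      simp only [← axis_lt _ _ _ _ _ _ _ _ h'.2.1 h.2.1, ← axis_lt _ _ _ _ _ _ _ _ h.2.1 h'.2.1,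
        ← axis_lt _ _ _ _ _ _ _ _ h'.2.1 hM.2.1, ← axis_lt _ _ _ _ _ _ _ _ h.2.1 hM.2.1,
        ← axis_lt _ _ _ _ _ _ _ _ hM.2.1 h'.2.1, ← axis_lt _ _ _ _ _ _ _ _ hM.2.1 h.2.1] at ok
      obtain ⟨o1, o2, o3, o4⟩ := ok
      refine half_diff (m+2) _ _ _ _ hp ?_ ?_ _ _ o1 o2 o3 o4
      · intro hc
        apply c2
        rw [← hm', ← sigma_axis r q σ hσ _ _ _ h', hc, sigma_axis r q σ hσ _ _ _ hM]
      · intro hc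
        apply c1
        rw [← sigma_axis r q σ hσ _ _ _ hM, ← hc, sigma_axis r q σ hσ _ _ _ h, hm]

lemma zfun_eq (r q : ℕ) (hr : 1 ≤ r) (hq : 1 ≤ q) (σ : Equiv.Perm ℕ) (hσ : SigmaRQ r q σ)
    (L : Tag) (j k : ℕ) (M : Tag) (a b : ℕ) (h : Gen r q L j k) (hM : Gen r q M a b) :
    zfun σ (meanderPos r q L j k) (meanderPos r q M a b) = Z L j k M a b := by
  obtain ⟨m, hm⟩ : ∃ m, meanderPos r q L j k = m + 1 :=
    ⟨meanderPos r q L j k - 1, by have := (mpos_range r q L j k h).1; omega⟩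
  rw [zfun, hm]; exact zrec_eq r q hr hq σ hσ M a b hM m L j k h hm

lemma mz_of_ER (L : Tag) (j k : ℕ) (L' : Tag) (j' k' : ℕ) (h : ER L j k L' j' k') :
    mz L j k = mz L' j' k' + 1 := by
  cases L <;> cases L' <;> simp only [ER, mz] at * <;> omega

lemma edge_iff (r q : ℕ) (hr : 1 ≤ r) (hq : 1 ≤ q) (σ : Equiv.Perm ℕ) (hσ : SigmaRQ r q σ)
    (L : Tag) (j k : ℕ) (L' : Tag) (j' k' : ℕ) (h : Gen r q L j k) (h' : Gen r q L' j' k') :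
    hasEdge (2*(r+1)*(q+1)-1) σ (meanderPos r q L j k) (meanderPos r q L' j' k') ↔
      ER L j k L' j' k' := by
  obtain ⟨r1, r2⟩ := mpos_range r q L j k h
  obtain ⟨r3, r4⟩ := mpos_range r q L' j' k' h'
  unfold hasEdge
  rw [morse_eq' r q hr hq σ hσ _ _ _ h, morse_eq' r q hr hq σ hσ _ _ _ h',
    zfun_eq r q hr hq σ hσ _ _ _ _ _ _ h h']
  constructor
  · rintro ⟨-, -, -, -, hm, hb⟩
    by_contra he
    obtain ⟨M, a, b, hM, hbt, z1, z2⟩ := ex_block r q L j k L' j' k' h h' hm he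
    rw [← mpos_lt _ _ _ _ _ _ _ _ h.1 h.2.1 hM.1 hM.2.1,
      ← mpos_lt _ _ _ _ _ _ _ _ hM.1 hM.2.1 h.1 h.2.1,
      ← mpos_lt _ _ _ _ _ _ _ _ h'.1 h'.2.1 hM.1 hM.2.1,
      ← mpos_lt _ _ _ _ _ _ _ _ hM.1 hM.2.1 h'.1 h'.2.1] at hbt
    refine hb ⟨meanderPos r q M a b, by omega, by omega, ?_, ?_⟩
    · rw [zfun_eq r q hr hq σ hσ _ _ _ _ _ _ h hM, zfun_eq r q hr hq σ hσ _ _ _ _ _ _ hM h', z1]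
    · rw [zfun_eq r q hr hq σ hσ _ _ _ _ _ _ hM h', z2]
  · intro he
    refine ⟨r1, r2, r3, r4, mz_of_ER _ _ _ _ _ _ he, ?_⟩
    rintro ⟨w, w1, w2, z1, z2⟩
    obtain ⟨M, a, b, hM, rfl⟩ := mpos_surj r q w (by omega) (by omega)
    rw [zfun_eq r q hr hq σ hσ _ _ _ _ _ _ h hM, zfun_eq r q hr hq σ hσ _ _ _ _ _ _ hM h'] at z1
    rw [zfun_eq r q hr hq σ hσ _ _ _ _ _ _ hM h'] at z2
    refine no_block r q L j k L' j' k' M a b h h' hM he ?_ z1 z2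
    rw [← mpos_lt _ _ _ _ _ _ _ _ h.1 h.2.1 hM.1 hM.2.1,
      ← mpos_lt _ _ _ _ _ _ _ _ hM.1 hM.2.1 h.1 h.2.1,
      ← mpos_lt _ _ _ _ _ _ _ _ h'.1 h'.2.1 hM.1 hM.2.1,
      ← mpos_lt _ _ _ _ _ _ _ _ hM.1 hM.2.1 h'.1 h'.2.1]
    omega

lemma gen_of_not_star (r q : ℕ) (L : Tag) (j k : ℕ) (hj : j ≤ r) (hk : k ≤ q)
    (h : ¬ IsStar L j k) : Gen r q L j k := by
  refine ⟨hj, hk, fun e => ?_⟩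
  by_contra hc
  exact h ⟨e, by omega, by omega⟩

lemma pedge_iff (r q : ℕ) (hr : 1 ≤ r) (hq : 1 ≤ q) (σ : Equiv.Perm ℕ) (hσ : SigmaRQ r q σ)
    (L : Tag) (j k : ℕ) (L' : Tag) (j' k' : ℕ) (hj : j ≤ r) (hk : k ≤ q) (hj' : j' ≤ r)
    (hk' : k' ≤ q) : PEdge r q σ L j k L' j' k' ↔ ER L j k L' j' k' := by
  unfold PEdge
  by_cases s : IsStar L j k
  · simp only [s, not_true_eq_false, false_and, or_self, false_iff]
    obtain ⟨rfl, rfl, rfl⟩ := s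
    cases L' <;> simp [ER]
  · have g := gen_of_not_star r q L j k hj hk s
    by_cases s' : IsStar L' j' k'
    · simp only [s, s', not_true_eq_false, not_false_eq_true, false_and, true_and, and_false,
        false_or]
      obtain ⟨rfl, rfl, rfl⟩ := s'
      rw [sigma_axis r q σ hσ _ _ _ g, morse_eq' r q hr hq σ hσ _ _ _ g]
      cases L <;> simp only [ER, mz] <;> omega
    · have g' := gen_of_not_star r q L' j' k' hj' hk' s'
      simp only [s, s', not_false_eq_true, false_and, true_and, and_false, or_false]
      rw [sigma_axis r q σ hσ _ _ _ g, sigma_axis r q σ hσ _ _ _ g',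
        edge_iff r q hr hq σ hσ _ _ _ _ _ _ g g']

end ThreeNose

/-- time reversibility of the pointed connection graph: the
involution `R : A^j_k ↔ B^{r-j}_{q-k}` reverses all edges. -/
theorem stmt_10 (r q : ℕ) (hr : 1 ≤ r) (hq : 1 ≤ q) (hrq : 1 < r*q)
    (σ : Equiv.Perm ℕ) (hσ : SigmaRQ r q σ) :
    ∀ (L L' : Tag) (j k j' k' : ℕ), j ≤ r → k ≤ q → j' ≤ r → k' ≤ q →
      (PEdge r q σ L j k L' j' k' ↔
        PEdge r q σ (tagSwap L') (r-j') (q-k') (tagSwap L) (r-j) (q-k)) := by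
  intro L L' j k j' k' hj hk hj' hk'
  rw [ThreeNose.pedge_iff r q hr hq σ hσ _ _ _ _ _ _ hj hk hj' hk',
    ThreeNose.pedge_iff r q hr hq σ hσ _ _ _ _ _ _ (Nat.sub_le _ _) (Nat.sub_le _ _)
      (Nat.sub_le _ _) (Nat.sub_le _ _)]
  cases L <;> cases L' <;> simp only [ThreeNose.ER, tagSwap] <;> omega
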